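/- Let X and Y be real Banach spaces, let r > 0, and let H : X → Y be Fréchet differentiable at every point of the closed ball B_r(0) ⊆ X with ‖H'(U₁) − H'(U₂)‖ ≤ L‖U₁ − U₂‖ for all U₁, U₂ ∈ B_r(0). Suppose there exists a continuous linear operator A : Y → X that is a two-sided inverse of H'(0), set M = ‖A‖, Λ = ‖A(H(0))‖, and assume λ := MΛL < 1/4 and Λt₀ ≤ r with t₀ the least root of λt² − t + 1 = 0 (t₀ = 1 when λ = 0). Then the modified Newton sequence defined by U₀ = 0 and U_{n+1} = U_n − A(H(U_n)) is well defined, every U_n lies in the closed ball of radius Λt₀ centered at 0, and U_n converges in norm to a point U* in that ball satisfying H(U*) = 0. -/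

import Mathlib

open Metric Filter

/-!
The iterates are those of `T x = x - A (H x)`, whose fixed points are the zeros of `H` since `A` is
injective. The derivative `id - A ∘ H' x` vanishes at the starting point and hence has norm at most
`‖A‖ L R` on the ball of radius `R` around it. So `T` is a contraction on that ball as soon as
`‖A‖ L R < 1`, and it maps the ball into itself as soon as `Λ + ‖A‖ L R ^ 2 ≤ R`.
For `R = Λ t` both follow from `lam * t ^ 2 + 1 ≤ t`, and the least root `t₀` gives the smallest
admissible ball.
-/

open scoped NNReal

section LocalContraction

variable {α : Type*} {f : α → α} {x : α} {K : ℝ≥0} {R : ℝ}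

theorem eq_iterate_of_succ {u : ℕ → α} (hu : ∀ n, u (n + 1) = f (u n)) (n : ℕ) :
    u n = f^[n] (u 0) := by
  induction n with
  | zero => rfl
  | succ n ih => rw [hu, ih, Function.iterate_succ_apply']

theorem mapsTo_closedBall_of_lipschitzOnWith [PseudoMetricSpace α]
    (hf : LipschitzOnWith K f (closedBall x R)) (hx : dist (f x) x ≤ (1 - K) * R) :
    Set.MapsTo f (closedBall x R) (closedBall x R) := fun y hy ↦ by
  have hxR : x ∈ closedBall x R := mem_closedBall_self (dist_nonneg.trans hy)
  calc dist (f y) x ≤ dist (f y) (f x) + dist (f x) x := dist_triangle _ _ _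
    _ ≤ K * dist y x + (1 - K) * R := add_le_add (hf.dist_le_mul y hy x hxR) hx
    _ ≤ K * R + (1 - K) * R := by gcongr; exact hy
    _ = R := by ring

theorem exists_isFixedPt_tendsto_iterate_of_lipschitzOnWith_closedBall
    [MetricSpace α] [CompleteSpace α] (hK : K < 1)
    (hf : LipschitzOnWith K f (closedBall x R)) (hx : dist (f x) x ≤ (1 - K) * R) :
    (∀ n, f^[n] x ∈ closedBall x R) ∧
      ∃ y ∈ closedBall x R, Tendsto (fun n ↦ f^[n] x) atTop (nhds y) ∧ Function.IsFixedPt f y := by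
  have hR : 0 ≤ R := nonneg_of_mul_nonneg_right (dist_nonneg.trans hx) (sub_pos.2 hK)
  have hxR : x ∈ closedBall x R := mem_closedBall_self hR
  have hmaps := mapsTo_closedBall_of_lipschitzOnWith hf hx
  obtain ⟨y, hy, hfix, hlim, -⟩ := ContractingWith.exists_fixedPoint'
    isClosed_closedBall.isComplete hmaps ⟨hK, hf.mapsToRestrict hmaps⟩ hxR (edist_ne_top _ _)
  exact ⟨fun n ↦ hmaps.iterate n hxR, y, hy, hlim, hfix⟩

end LocalContraction

-- A point at distance exactly `R` from the centre shows `0 ≤ L * R` whatever the sign of `L`.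
theorem norm_le_mul_radius_of_norm_le_mul_norm_sub {E F : Type*}
    [SeminormedAddCommGroup E] [SeminormedAddCommGroup F] {g : E → F} {x₀ : E} {L R : ℝ}
    (hg : ∀ x ∈ closedBall x₀ R, ‖g x‖ ≤ L * ‖x - x₀‖)
    {x₁ : E} (hx₁ : ‖x₁ - x₀‖ = R) {x : E} (hx : x ∈ closedBall x₀ R) : ‖g x‖ ≤ L * R := by
  have hx₁_mem : x₁ ∈ closedBall x₀ R := mem_closedBall_iff_norm.2 hx₁.le
  have hLR : 0 ≤ L * R := by simpa only [hx₁] using (norm_nonneg _).trans (hg x₁ hx₁_mem)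
  refine (hg x hx).trans ?_
  rcases le_total 0 L with hL | hL
  · exact mul_le_mul_of_nonneg_left (mem_closedBall_iff_norm.1 hx) hL
  · exact (mul_nonpos_of_nonpos_of_nonneg hL (norm_nonneg _)).trans hLR

section ModifiedNewtonStep

variable {𝕜 X Y : Type*} [NontriviallyNormedField 𝕜] [NormedAddCommGroup X] [NormedSpace 𝕜 X]
  [NormedAddCommGroup Y] [NormedSpace 𝕜 Y] {H : X → Y} {A : Y →L[𝕜] X}

/-- One step of the modified Newton method for `H x = 0`, in which the inverse of the derivative is
replaced by the same operator `A` at every point. -/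
def modifiedNewtonStep (A : Y →L[𝕜] X) (H : X → Y) (x : X) : X := x - A (H x)

theorem isFixedPt_modifiedNewtonStep_iff (hA : Function.Injective A) {x : X} :
    Function.IsFixedPt (modifiedNewtonStep A H) x ↔ H x = 0 := by
  rw [Function.IsFixedPt, modifiedNewtonStep, sub_eq_self, map_eq_zero_iff A hA]

theorem hasFDerivWithinAt_modifiedNewtonStep {B : X →L[𝕜] Y} {s : Set X} {x : X}
    (hH : HasFDerivWithinAt H B s x) :
    HasFDerivWithinAt (modifiedNewtonStep A H) (.id 𝕜 X - A.comp B) s x :=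
  (hasFDerivWithinAt_id x s).sub (A.hasFDerivAt.comp_hasFDerivWithinAt x hH)

theorem norm_id_sub_comp_le_of_leftInverse {B₀ : X →L[𝕜] Y} (hA : Function.LeftInverse A B₀)
    (B : X →L[𝕜] Y) : ‖.id 𝕜 X - A.comp B‖ ≤ ‖A‖ * ‖B - B₀‖ := by
  have hfactor : .id 𝕜 X - A.comp B = A.comp (B₀ - B) := by
    ext v
    simp [hA v]
  rw [hfactor, norm_sub_rev B]
  exact A.opNorm_comp_le _

end ModifiedNewtonStep

section ModifiedNewton

variable {𝕜 X Y : Type*} [RCLike 𝕜] [NormedAddCommGroup X] [NormedSpace 𝕜 X]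
  [NormedAddCommGroup Y] [NormedSpace 𝕜 Y] {H : X → Y} {H' : X → X →L[𝕜] Y} {A : Y →L[𝕜] X}
  {x₀ : X} {R : ℝ}

theorem lipschitzOnWith_modifiedNewtonStep {K : ℝ≥0}
    (hdiff : ∀ x ∈ closedBall x₀ R, HasFDerivWithinAt H (H' x) (closedBall x₀ R) x)
    (hK : ∀ x ∈ closedBall x₀ R, ‖.id 𝕜 X - A.comp (H' x)‖ ≤ K) :
    LipschitzOnWith K (modifiedNewtonStep A H) (closedBall x₀ R) :=
  letI : NormedSpace ℝ X := NormedSpace.restrictScalars ℝ 𝕜 X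
  (convex_closedBall x₀ R).lipschitzOnWith_of_nnnorm_hasFDerivWithin_le
    (fun x hx ↦ hasFDerivWithinAt_modifiedNewtonStep (hdiff x hx)) hK

theorem modifiedNewton_converges_of_norm_id_sub_comp_le [CompleteSpace X] {K : ℝ≥0}
    (hA : Function.Injective A)
    (hdiff : ∀ x ∈ closedBall x₀ R, HasFDerivWithinAt H (H' x) (closedBall x₀ R) x)
    (hK : ∀ x ∈ closedBall x₀ R, ‖.id 𝕜 X - A.comp (H' x)‖ ≤ K)
    (hK_lt : K < 1) (hR : ‖A (H x₀)‖ ≤ (1 - K) * R)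
    {U : ℕ → X} (hU0 : U 0 = x₀) (hUrec : ∀ n, U (n + 1) = U n - A (H (U n))) :
    (∀ n, U n ∈ closedBall x₀ R) ∧
      ∃ Ustar ∈ closedBall x₀ R, Tendsto U atTop (nhds Ustar) ∧ H Ustar = 0 := by
  have hU : U = fun n ↦ (modifiedNewtonStep A H)^[n] x₀ :=
    funext fun n ↦ hU0 ▸ eq_iterate_of_succ (f := modifiedNewtonStep A H) hUrec n
  have hmove : dist (modifiedNewtonStep A H x₀) x₀ ≤ (1 - K) * R := by
    simpa [modifiedNewtonStep, dist_eq_norm] using hR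
  simpa only [hU, isFixedPt_modifiedNewtonStep_iff hA] using
    exists_isFixedPt_tendsto_iterate_of_lipschitzOnWith_closedBall hK_lt
      (lipschitzOnWith_modifiedNewtonStep hdiff hK) hmove

theorem newton_iterates_converge_general [CompleteSpace X] {L t : ℝ}
    (hdiff : ∀ x ∈ closedBall x₀ (‖A (H x₀)‖ * t),
      HasFDerivWithinAt H (H' x) (closedBall x₀ (‖A (H x₀)‖ * t)) x)
    (hLip : ∀ x ∈ closedBall x₀ (‖A (H x₀)‖ * t), ‖H' x - H' x₀‖ ≤ L * ‖x - x₀‖)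
    (hA_left : ∀ y, H' x₀ (A y) = y) (hA_right : ∀ x, A (H' x₀ x) = x)
    (ht : 0 ≤ t) (ht_quad : ‖A‖ * ‖A (H x₀)‖ * L * t ^ 2 + 1 ≤ t)
    {U : ℕ → X} (hU0 : U 0 = x₀) (hUrec : ∀ n, U (n + 1) = U n - A (H (U n))) :
    (∀ n, U n ∈ closedBall x₀ (‖A (H x₀)‖ * t)) ∧
      ∃ Ustar ∈ closedBall x₀ (‖A (H x₀)‖ * t),
        Tendsto U atTop (nhds Ustar) ∧ H Ustar = 0 := by
  set R := ‖A (H x₀)‖ * t with hR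
  have hsphere : ‖x₀ + (t : 𝕜) • A (H x₀) - x₀‖ = R := by
    rw [add_sub_cancel_left, norm_smul, RCLike.norm_of_nonneg ht, mul_comm]
  have hH' : ∀ x ∈ closedBall x₀ R, ‖H' x - H' x₀‖ ≤ L * R := fun x hx ↦
    norm_le_mul_radius_of_norm_le_mul_norm_sub hLip hsphere hx
  have hx₀ : x₀ ∈ closedBall x₀ R := mem_closedBall_self (by positivity)
  have hLR : 0 ≤ L * R := (norm_nonneg _).trans (hH' x₀ hx₀)
  obtain ⟨K, hK⟩ : ∃ K : ℝ≥0, (K : ℝ) = ‖A‖ * (L * R) := ⟨⟨_, by positivity⟩, rfl⟩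
  have hKt : K * t + 1 ≤ t := by
    convert ht_quad using 2
    rw [hK, hR]
    ring
  have hK_lt : (K : ℝ) < 1 := by
    by_contra! hK_ge
    linarith [le_mul_of_one_le_left ht hK_ge]
  refine modifiedNewton_converges_of_norm_id_sub_comp_le
    (Function.LeftInverse.injective hA_left) hdiff (fun x hx ↦ ?_) hK_lt ?_ hU0 hUrec
  · rw [hK]
    exact (norm_id_sub_comp_le_of_leftInverse hA_right _).trans
      (mul_le_mul_of_nonneg_left (hH' x hx) (norm_nonneg A))
  · calc ‖A (H x₀)‖ ≤ ‖A (H x₀)‖ * (t - K * t) :=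
          le_mul_of_one_le_right (norm_nonneg _) (by linarith)
      _ = (1 - K) * R := by rw [hR]; ring

end ModifiedNewton

section LeastRoot

variable {a : ℝ}

/-- The root `t₀` of `a * t ^ 2 - t + 1` that fixes the radius of the Newton ball: the least one for
`0 < a ≤ 1 / 4`, and the only one for `a = 0`, where the quadratic formula would divide by zero. -/
noncomputable def leastRoot (a : ℝ) : ℝ := if a = 0 then 1 else (1 - √(1 - 4 * a)) / (2 * a)

theorem leastRoot_eq_two_div (ha : a ≤ 1 / 4) : leastRoot a = 2 / (1 + √(1 - 4 * a)) := by
  have hsq : √(1 - 4 * a) ^ 2 = 1 - 4 * a := Real.sq_sqrt (by linarith)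
  unfold leastRoot
  split_ifs with h
  · norm_num [h]
  · rw [div_eq_div_iff (by positivity) (by positivity)]
    linear_combination -hsq

theorem leastRoot_nonneg (ha : a ≤ 1 / 4) : 0 ≤ leastRoot a := by
  rw [leastRoot_eq_two_div ha]
  positivity

theorem mul_leastRoot_sq_add_one (ha : a ≤ 1 / 4) : a * leastRoot a ^ 2 + 1 = leastRoot a := by
  have hsq : √(1 - 4 * a) ^ 2 = 1 - 4 * a := Real.sq_sqrt (by linarith)
  rw [leastRoot_eq_two_div ha]
  set s := √(1 - 4 * a)
  have hs : 0 < 1 + s := by positivity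
  field_simp
  linear_combination hsq

end LeastRoot

/-- Modified Newton's method: the iterates `U₀ = 0`, `U_{n+1} = U_n - A (H (U_n))`
stay in the closed ball of radius `Λ * t₀` and converge to a zero of `H` in that ball. -/
theorem newton_iterates_converge
    {X Y : Type*} [NormedAddCommGroup X] [NormedSpace ℝ X] [CompleteSpace X]
    [NormedAddCommGroup Y] [NormedSpace ℝ Y] [CompleteSpace Y]
    (r L : ℝ) (hr : 0 < r)
    (H : X → Y) (H' : X → X →L[ℝ] Y)
    (hdiff : ∀ U ∈ closedBall (0 : X) r, HasFDerivAt H (H' U) U)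
    (hLip : ∀ U₁ ∈ closedBall (0 : X) r, ∀ U₂ ∈ closedBall (0 : X) r,
      ‖H' U₁ - H' U₂‖ ≤ L * ‖U₁ - U₂‖)
    (A : Y →L[ℝ] X)
    (hA_left : ∀ y : Y, H' 0 (A y) = y)
    (hA_right : ∀ x : X, A (H' 0 x) = x)
    (M Λ lam t₀ : ℝ)
    (hM : M = ‖A‖) (hΛ : Λ = ‖A (H 0)‖)
    (hlam : lam = M * Λ * L)
    (hlam_lt : lam < 1 / 4)
    (ht₀ : t₀ = if lam = 0 then 1 else (1 - Real.sqrt (1 - 4 * lam)) / (2 * lam))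
    (hball : Λ * t₀ ≤ r)
    (U : ℕ → X) (hU0 : U 0 = 0)
    (hUrec : ∀ n : ℕ, U (n + 1) = U n - A (H (U n))) :
    (∀ n : ℕ, U n ∈ closedBall (0 : X) (Λ * t₀)) ∧
    ∃ Ustar ∈ closedBall (0 : X) (Λ * t₀),
      Tendsto U atTop (nhds Ustar) ∧ H Ustar = 0 := by
  subst hM hΛ hlam ht₀
  have hsub := closedBall_subset_closedBall (x := (0 : X)) hball
  exact newton_iterates_converge_general (fun x hx ↦ (hdiff x (hsub hx)).hasFDerivWithinAt)
    (fun x hx ↦ hLip x (hsub hx) 0 (mem_closedBall_self hr.le)) hA_left hA_right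
    (leastRoot_nonneg hlam_lt.le) (mul_leastRoot_sq_add_one hlam_lt.le).le hU0 hUrec
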